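/- Let k, l ≥ 2 be multiplicatively independent integers, let u ∈ Σ_k* and v ∈ Σ_l* be words beginning with nonzero digits, and let t ≥ 0 be an integer. Then the set A = { n ∈ ℕ : (n)_k = u x 0^{t+1} for some x ∈ Σ_k* and (n)_l = v y 0^{t+1} for some y ∈ Σ_l* } has positive upper density; more precisely, d̄(A) ≥ ε/(1 + ε k^{t+1} l^{t+1}) where ε = 1/(k^{|u|+t+2} l^{|v|+t+2}). -/

import Mathlib

open Filter

/-- The upper density of a set of natural numbers:
`limsup_{n → ∞} |A ∩ [0,n)| / n`. -/
noncomputable def upperDensity (A : Set ℕ) : ℝ :=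
  limsup (fun n : ℕ => (Nat.card ↥(A ∩ Set.Iio n) : ℝ) / n) atTop

/-- The base-`k` representation of `n` as a word over `Σ_k = Fin k`, read starting
from the leading digit, with no leading zeros (junk value `[]` if `k ≤ 1`;
the representation of `0` is the empty word). -/
def kRepr (k n : ℕ) : List (Fin k) :=
  if h : 1 < k then
    (Nat.digits k n).reverse.pmap (fun d hd => (⟨d, hd⟩ : Fin k))
      (fun d hd => Nat.digits_lt_base h (List.mem_reverse.mp hd))
  else []

/-- Run a deterministic automaton with transition function `δ` from the state `s`
on the word `w`, reading `w` from the left: the extended transition function `δ*`. -/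
def run {S : Type*} {k : ℕ} (δ : S → Fin k → S) (s : S) (w : List (Fin k)) : S :=
  w.foldl δ s

/-- A sequence `a : ℕ → Ω` is `k`-automatic if it is produced by a deterministic
finite automaton with output, reading the base-`k` representation of the input
starting from the leading digit. -/
def IsAutomatic {Ω : Type*} (k : ℕ) (a : ℕ → Ω) : Prop :=
  ∃ (S : Type) (_ : Fintype S) (δ : S → Fin k → S) (s₀ : S) (τ : S → Ω),
    ∀ n : ℕ, a n = τ (run δ s₀ (kRepr k n))

/-- Two integers are multiplicatively independent if no nontrivial powers of them
coincide (equivalently, they are not both powers of a common integer). -/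
def MultIndep (k l : ℕ) : Prop :=
  ∀ i j : ℕ, k ^ i = l ^ j → i = 0 ∧ j = 0

/-- The finite word `w` occurs in the sequence `a` at position `i`. -/
def OccursAt {Ω : Type*} (a : ℕ → Ω) (w : List Ω) (i : ℕ) : Prop :=
  ∀ (j : ℕ) (h : j < w.length), w.get ⟨j, h⟩ = a (i + j)

/-- The finite word `w` is a factor of the sequence `a`. -/
def IsFactor {Ω : Type*} (a : ℕ → Ω) (w : List Ω) : Prop :=
  ∃ i : ℕ, OccursAt a w i

/-- A sequence is uniformly recurrent if each of its factors occurs in it with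
bounded gaps. -/
def UniformlyRecurrent {Ω : Type*} (a : ℕ → Ω) : Prop :=
  ∀ w : List Ω, IsFactor a w →
    ∃ C : ℕ, ∀ N : ℕ, ∃ i : ℕ, N ≤ i ∧ i ≤ N + C ∧ OccursAt a w i

/-- A strongly connected component of an automaton: a nonempty set of states closed
under all transitions and such that each of its states can be reached from each
other one by some word. -/
def IsSCC {S : Type*} {k : ℕ} (δ : S → Fin k → S) (C : Set S) : Prop :=
  C.Nonempty ∧ (∀ s ∈ C, ∀ u : Fin k, δ s u ∈ C) ∧
    ∀ s ∈ C, ∀ s' ∈ C, ∃ w : List (Fin k), run δ s w = s'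

/-!
A number has base-`k` representation `u x 0^s` as soon as it is a multiple of `k ^ s` in an
interval `[U k^i, (U + 1) k^i)` with `i ≥ s`, where `U` is the value of `u`. Multiplicative
independence makes the ratios `k^i / l^j` dense, so `i` and `j` can be chosen with `U k^i` just
above `V l^j`, where `V` is the value of `v`. The intersection of `[U k^i, (U + 1) k^i)` and
`[V l^j, (V + 1) l^j)` then occupies nearly the proportion `1 / max (U + 1) (V + 1)` of the initial
segment ending with it, and about one in `k^s l^t` of its elements is a multiple of `k^s l^t`.
-/

section Density

lemma isBoundedUnder_card_inter_Iio_div (A : Set ℕ) :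
    IsBoundedUnder (· ≤ ·) atTop fun n : ℕ => (Nat.card ↥(A ∩ Set.Iio n) : ℝ) / n := by
  refine isBoundedUnder_of ⟨1, fun n => div_le_one_of_le₀ ?_ n.cast_nonneg⟩
  have hcard : (A ∩ Set.Iio n).ncard ≤ (Set.Iio n).ncard :=
    Set.ncard_le_ncard Set.inter_subset_right (Set.finite_Iio n)
  simpa [Nat.card_coe_set_eq, Set.ncard_eq_toFinset_card'] using hcard

lemma upperDensity_mono {A B : Set ℕ} (h : A ⊆ B) : upperDensity A ≤ upperDensity B := by
  refine limsup_le_limsup (Eventually.of_forall fun n => ?_)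
    (isCoboundedUnder_le_of_le atTop fun n => by positivity)
    (isBoundedUnder_card_inter_Iio_div B)
  have hcard : Nat.card ↥(A ∩ Set.Iio n) ≤ Nat.card ↥(B ∩ Set.Iio n) :=
    Nat.card_mono ((Set.finite_Iio n).inter_of_right B) (Set.inter_subset_inter_left _ h)
  dsimp only
  gcongr

lemma sub_div_sub_one_le_card_filter_dvd {M : ℕ} (hM : 0 < M) (L R : ℕ) :
    ((R : ℝ) - L) / M - 1 ≤ ({n ∈ Finset.Ico L R | M ∣ n} : Finset ℕ).card := by
  have hcount := Nat.Ico_filter_modEq_card L R hM 0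
  simp only [Nat.modEq_zero_iff_dvd, Nat.cast_zero, sub_zero] at hcount
  have hR := Int.le_ceil ((R : ℚ) / M)
  have hL := Int.ceil_lt_add_one ((L : ℚ) / M)
  have hceil : (⌈(R : ℚ) / M⌉ - ⌈(L : ℚ) / M⌉ : ℚ) ≤
      ({n ∈ Finset.Ico L R | M ∣ n} : Finset ℕ).card := by
    exact_mod_cast (le_max_left _ _).trans_eq hcount.symm
  have hrat : ((R : ℚ) - L) / M - 1 ≤ ({n ∈ Finset.Ico L R | M ∣ n} : Finset ℕ).card := by
    rw [sub_div]
    linarith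
  exact_mod_cast hrat

lemma sub_div_sub_one_le_card_inter_Iio {A : Set ℕ} {M L R : ℕ} (hM : 0 < M)
    (hA : ∀ n ∈ Set.Ico L R, M ∣ n → n ∈ A) :
    ((R : ℝ) - L) / M - 1 ≤ Nat.card ↥(A ∩ Set.Iio R) := by
  refine (sub_div_sub_one_le_card_filter_dvd hM L R).trans ?_
  have hsub : (({n ∈ Finset.Ico L R | M ∣ n} : Finset ℕ) : Set ℕ) ⊆ A ∩ Set.Iio R := by
    intro n hn
    obtain ⟨hmem, hdvd⟩ := Finset.mem_filter.1 hn
    have hIco := Finset.mem_Ico.1 hmem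
    exact ⟨hA n hIco hdvd, hIco.2⟩
  have hcard := Set.ncard_le_ncard hsub ((Set.finite_Iio R).inter_of_right A)
  rw [Set.ncard_coe_finset] at hcard
  exact_mod_cast hcard

lemma div_le_upperDensity {A : Set ℕ} {M : ℕ} (hM : 0 < M) {c : ℝ}
    (h : ∃ᶠ R : ℕ in atTop, ∃ L : ℕ, c * R ≤ R - L ∧ ∀ n ∈ Set.Ico L R, M ∣ n → n ∈ A) :
    c / M ≤ upperDensity A := by
  refine le_of_forall_lt_imp_le_of_dense fun c' hc' => ?_
  have hlim : Tendsto (fun R : ℕ => c / M - 1 / (R : ℝ)) atTop (nhds (c / M)) := by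
    simpa using tendsto_const_nhds.sub (tendsto_one_div_atTop_nhds_zero_nat (𝕜 := ℝ))
  refine le_limsup_of_frequently_le ?_ (isBoundedUnder_card_inter_Iio_div A)
  refine (h.and_eventually ((hlim.eventually_const_lt hc').and (eventually_gt_atTop 0))).mono ?_
  rintro R ⟨⟨L, hLR, hA⟩, hR, hR0⟩
  calc c' ≤ c / M - 1 / R := hR.le
    _ = (c * R / M - 1) / R := by field_simp
    _ ≤ ((R - L) / M - 1) / R := by gcongr
    _ ≤ Nat.card ↥(A ∩ Set.Iio R) / R := by
      gcongr
      exact sub_div_sub_one_le_card_inter_Iio hM hA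

end Density

section PowerRatios

lemma MultIndep.irrational_log_div_log {k l : ℕ} (hk : 2 ≤ k) (hl : 2 ≤ l) (h : MultIndep k l) :
    Irrational (Real.log k / Real.log l) := by
  have hk0 : 0 < Real.log k := Real.log_pos (by exact_mod_cast hk)
  have hl0 : 0 < Real.log l := Real.log_pos (by exact_mod_cast hl)
  rintro ⟨q, hq⟩
  have hq0 : 0 ≤ q := by
    have : (0 : ℝ) ≤ q := hq ▸ (div_pos hk0 hl0).le
    exact_mod_cast this
  lift q to ℚ≥0 using hq0
  have hlog : q.den * Real.log k = q.num * Real.log l := by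
    have hq' : (q.num / q.den : ℝ) = Real.log k / Real.log l := by
      rw [← hq, Rat.cast_nnratCast, NNRat.cast_def]
    have hden : (q.den : ℝ) ≠ 0 := by exact_mod_cast q.den_ne_zero
    rw [div_eq_div_iff hden hl0.ne'] at hq'
    linarith
  have hpow : (k : ℝ) ^ q.den = (l : ℝ) ^ q.num := by
    rw [← Real.log_pow, ← Real.log_pow] at hlog
    exact Real.log_injOn_pos (Set.mem_Ioi.2 (by positivity)) (Set.mem_Ioi.2 (by positivity)) hlog
  exact q.den_ne_zero (h _ _ (by exact_mod_cast hpow)).1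

lemma frequently_exists_coe_eq_nsmul {x y : ℝ} (hy : 0 < y) (hxy : Irrational (x / y))
    {a b : ℝ} (hab : a < b) :
    ∃ᶠ i : ℕ in atTop, ∃ r ∈ Set.Ioo a b, (r : AddCircle y) = i • (x : AddCircle y) := by
  have : Fact (0 < y) := ⟨hy⟩
  obtain ⟨c, hc⟩ := exists_between hab
  have hdense : DenseRange (fun n : ℤ => n • (x : AddCircle y)) :=
    AddCircle.denseRange_zsmul_coe_iff.2 hxy
  have hcluster : MapClusterPt (c : AddCircle y) atTop (fun n : ℕ => n • (x : AddCircle y)) :=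
    ((mapClusterPt_atTop_nsmul_tfae _ _).out 0 3).2 (hdense _)
  have hnhds : (fun r : ℝ => (r : AddCircle y)) '' Set.Ioo a b ∈ nhds (c : AddCircle y) :=
    (QuotientAddGroup.isOpenMap_coe _ isOpen_Ioo).mem_nhds ⟨c, hc, rfl⟩
  exact mapClusterPt_iff_frequently.1 hcluster _ hnhds

lemma exists_nat_mul_sub_nat_mul_mem_Ioo {x y : ℝ} (hx : 0 < x) (hy : 0 < y)
    (hxy : Irrational (x / y)) {a b : ℝ} (hab : a < b) (N : ℕ) :
    ∃ i ≥ N, ∃ j ≥ N, (i * x - j * y : ℝ) ∈ Set.Ioo a b := by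
  have hlarge : ∀ᶠ i : ℕ in atTop, N * y + b ≤ i * x :=
    (tendsto_natCast_atTop_atTop.atTop_mul_const hx).eventually_ge_atTop _
  obtain ⟨i, ⟨r, hr, hri⟩, hi, hNi⟩ := ((frequently_exists_coe_eq_nsmul hy hxy hab).and_eventually
    (hlarge.and (eventually_ge_atTop N))).exists
  rw [← AddCircle.coe_nsmul, nsmul_eq_mul] at hri
  obtain ⟨m, hm⟩ := QuotientAddGroup.eq_iff_sub_mem.1 hri.symm
  have hmy : (m : ℝ) * y = i * x - r := by simpa using hm
  have hNm : (N : ℝ) < m := lt_of_mul_lt_mul_right (by linarith [hr.2]) hy.le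
  have hNm' : (N : ℤ) < m := by exact_mod_cast hNm
  lift m to ℕ using by omega
  have hr' : (i * x - m * y : ℝ) = r := by push_cast at hmy; linarith
  exact ⟨i, hNi, m, by omega, hr' ▸ hr⟩

lemma exists_pow_div_pow_mem_Ioo {x y : ℝ} (hx : 1 < x) (hy : 1 < y)
    (hxy : Irrational (Real.log x / Real.log y)) {a b : ℝ} (ha : 0 < a) (hab : a < b) (N : ℕ) :
    ∃ i ≥ N, ∃ j ≥ N, x ^ i / y ^ j ∈ Set.Ioo a b := by
  obtain ⟨i, hi, j, hj, h⟩ := exists_nat_mul_sub_nat_mul_mem_Ioo (Real.log_pos hx)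
    (Real.log_pos hy) hxy (Real.log_lt_log ha hab) N
  have hxi : 0 < x ^ i := by positivity
  have hyj : 0 < y ^ j := by positivity
  rw [← Real.log_pow, ← Real.log_pow, ← Real.log_div hxi.ne' hyj.ne'] at h
  exact ⟨i, hi, j, hj, (Real.log_lt_log_iff ha (by positivity)).1 h.1,
    (Real.log_lt_log_iff (by positivity) (ha.trans hab)).1 h.2⟩

end PowerRatios

section Overlap

variable {k l U V : ℕ}

lemma exists_Ico_subset_inter_Ico_mul_pow (hk : 2 ≤ k) (hl : 2 ≤ l) (hind : MultIndep k l)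
    (hU : 0 < U) (hV : 0 < V) {c : ℝ} (hcU : c * (U + 1) ≤ 1) (hcV : c * (V + 1) < 1) (N : ℕ) :
    ∃ i ≥ N, ∃ j ≥ N, ∃ R ≥ N, ∃ L : ℕ, c * R ≤ R - L ∧
      Set.Ico L R ⊆
        Set.Ico (U * k ^ i) ((U + 1) * k ^ i) ∩ Set.Ico (V * l ^ j) ((V + 1) * l ^ j) := by
  have hU' : (0 : ℝ) < U := by exact_mod_cast hU
  -- The window is nonempty because `c * (V + 1) < 1`; its lower end gives `V l^j < U k^i`, and its
  -- upper end keeps `U k^i` below `(1 - c) (V + 1) l^j`.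
  obtain ⟨i, hi, j, hj, hlow, hhigh⟩ := exists_pow_div_pow_mem_Ioo (x := k) (y := l)
    (by exact_mod_cast hk) (by exact_mod_cast hl) (hind.irrational_log_div_log hk hl)
    (a := V / U) (b := (1 - c) * (V + 1) / U) (by positivity) (by gcongr; linarith) N
  have hlj : (0 : ℝ) < (l : ℝ) ^ j := by positivity
  rw [div_lt_div_iff₀ hU' hlj] at hlow
  rw [div_lt_div_iff₀ hlj hU'] at hhigh
  have hVU : V * l ^ j ≤ U * k ^ i := by
    have : V * l ^ j < k ^ i * U := by exact_mod_cast hlow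
    linarith
  have hki : N ≤ k ^ i := hi.le.trans (Nat.lt_pow_self hk).le
  have hlj' : N ≤ l ^ j := hj.le.trans (Nat.lt_pow_self hl).le
  refine ⟨i, hi, j, hj, min ((U + 1) * k ^ i) ((V + 1) * l ^ j),
    le_min (hki.trans (Nat.le_mul_of_pos_left _ U.succ_pos))
      (hlj'.trans (Nat.le_mul_of_pos_left _ V.succ_pos)), U * k ^ i, ?_, fun n hn =>
    ⟨⟨hn.1, hn.2.trans_le (min_le_left _ _)⟩, hVU.trans hn.1, hn.2.trans_le (min_le_right _ _)⟩⟩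
  rcases min_choice ((U + 1) * k ^ i) ((V + 1) * l ^ j) with hmin | hmin <;>
    rw [hmin] <;> push_cast
  · have : c * (U + 1) * (k : ℝ) ^ i ≤ 1 * (k : ℝ) ^ i := by gcongr
    linarith
  · linarith

theorem one_div_max_div_le_upperDensity (hk : 2 ≤ k) (hl : 2 ≤ l) (hind : MultIndep k l)
    (hU : 0 < U) (hV : 0 < V) {M : ℕ} (hM : 0 < M) (s t : ℕ) :
    1 / max ((U : ℝ) + 1) (V + 1) / M ≤ upperDensity {n | M ∣ n ∧
      (∃ i ≥ s, n ∈ Set.Ico (U * k ^ i) ((U + 1) * k ^ i)) ∧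
      ∃ j ≥ t, n ∈ Set.Ico (V * l ^ j) ((V + 1) * l ^ j)} := by
  have hM' : (0 : ℝ) < M := by exact_mod_cast hM
  rw [div_le_iff₀ hM']
  refine le_of_forall_lt_imp_le_of_dense fun c hc => (div_le_iff₀ hM').1 ?_
  refine div_le_upperDensity hM (frequently_atTop.2 fun N => ?_)
  have hcU : c * (U + 1) < 1 := (lt_div_iff₀ (by positivity)).1 <|
    hc.trans_le (by gcongr; exact le_max_left _ _)
  have hcV : c * (V + 1) < 1 := (lt_div_iff₀ (by positivity)).1 <|
    hc.trans_le (by gcongr; exact le_max_right _ _)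
  obtain ⟨i, hi, j, hj, R, hR, L, hLR, hsub⟩ :=
    exists_Ico_subset_inter_Ico_mul_pow hk hl hind hU hV hcU.le hcV (max N (max s t))
  have hst : max s t ≤ max N (max s t) := le_max_right _ _
  exact ⟨R, (le_max_left _ _).trans hR, L, hLR, fun n hn hdvd =>
    ⟨hdvd, ⟨i, (le_max_left s t).trans (hst.trans hi), (hsub hn).1⟩,
      j, (le_max_right s t).trans (hst.trans hj), (hsub hn).2⟩⟩

end Overlap

section Words

variable {k : ℕ}

/-- The value of the word `w` read as a base-`k` expansion with leading digit first. -/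
def wordVal (w : List (Fin k)) : ℕ :=
  Nat.ofDigits k (w.map Fin.val).reverse

lemma wordVal_append (w w' : List (Fin k)) :
    wordVal (w ++ w') = wordVal w * k ^ w'.length + wordVal w' := by
  simp only [wordVal, List.map_append, List.reverse_append, Nat.ofDigits_append,
    List.length_reverse, List.length_map]
  ring

lemma wordVal_replicate_zero {z : Fin k} (hz : (z : ℕ) = 0) (s : ℕ) :
    wordVal (List.replicate s z) = 0 := by
  simp [wordVal, hz]

lemma wordVal_lt_pow_length (hk : 2 ≤ k) (w : List (Fin k)) : wordVal w < k ^ w.length := by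
  simpa using! Nat.ofDigits_lt_base_pow_length (b := k) (l := (w.map Fin.val).reverse) hk (by simp)

lemma exists_wordVal_eq {d r : ℕ} (hr : r < k ^ d) :
    ∃ w : List (Fin k), w.length = d ∧ wordVal w = r := by
  induction d generalizing r with
  | zero => exact ⟨[], rfl, by simp_all [wordVal]⟩
  | succ d ih =>
    rw [pow_succ] at hr
    have hk : 0 < k := Nat.pos_of_mul_pos_left (Nat.zero_lt_of_lt hr)
    obtain ⟨w, hw, hval⟩ := ih ((Nat.div_lt_iff_lt_mul hk).2 hr)
    refine ⟨w ++ [⟨r % k, Nat.mod_lt r hk⟩], by simp [hw], ?_⟩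
    rw [wordVal_append, hval]
    simpa [wordVal] using Nat.div_add_mod' r k

lemma map_val_kRepr (hk : 2 ≤ k) (n : ℕ) :
    (kRepr k n).map Fin.val = (Nat.digits k n).reverse := by
  simp [kRepr, show 1 < k from hk, List.map_pmap]

lemma kRepr_wordVal (hk : 2 ≤ k) {w : List (Fin k)} (hw : w ≠ []) (hw0 : (w.head hw : ℕ) ≠ 0) :
    kRepr k (wordVal w) = w := by
  refine List.map_injective_iff.2 Fin.val_injective ?_
  have hdigits : Nat.digits k (wordVal w) = (w.map Fin.val).reverse :=
    Nat.digits_ofDigits k hk _ (by simp) fun _ => by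
      simpa [List.getLast_reverse, List.head_map] using hw0
  rw [map_val_kRepr hk, hdigits, List.reverse_reverse]

lemma wordVal_pos (hk : 2 ≤ k) {w : List (Fin k)} (hw : w ≠ []) (hw0 : (w.head hw : ℕ) ≠ 0) :
    0 < wordVal w := by
  refine Nat.pos_of_ne_zero fun h => hw ?_
  rw [← kRepr_wordVal hk hw hw0, h]
  simp [kRepr]

lemma exists_kRepr_eq_append (hk : 2 ≤ k) {u : List (Fin k)} (hu : u ≠ [])
    (hu0 : (u.head hu : ℕ) ≠ 0) {z : Fin k} (hz : (z : ℕ) = 0) {s i n : ℕ} (hs : s ≤ i)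
    (hdvd : k ^ s ∣ n) (hn : n ∈ Set.Ico (wordVal u * k ^ i) ((wordVal u + 1) * k ^ i)) :
    ∃ x, kRepr k n = u ++ x ++ List.replicate s z := by
  obtain ⟨d, rfl⟩ := Nat.exists_eq_add_of_le' hs
  obtain ⟨m, rfl⟩ := hdvd
  rw [mul_comm (k ^ s), pow_add, ← mul_assoc, ← mul_assoc] at hn
  obtain ⟨r, rfl⟩ := Nat.exists_eq_add_of_le (Nat.le_of_mul_le_mul_right hn.1 (by positivity))
  have hr : r < k ^ d := by linarith [Nat.lt_of_mul_lt_mul_right hn.2]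
  obtain ⟨x, rfl, rfl⟩ := exists_wordVal_eq hr
  refine ⟨x, ?_⟩
  have hval : wordVal (u ++ x ++ List.replicate s z) =
      k ^ s * (wordVal u * k ^ x.length + wordVal x) := by
    rw [wordVal_append, wordVal_append, wordVal_replicate_zero hz, List.length_replicate]
    ring
  rw [← hval]
  exact kRepr_wordVal hk (by simp [hu]) (by simpa [List.head_append, hu] using hu0)

end Words

lemma one_div_pow_mul_pow_le_one_div_max {x y : ℝ} (hx : 1 ≤ x) (hy : 1 ≤ y)
    {a b s t m n : ℕ} (hm : a + s ≤ m) (hn : b + t ≤ n) :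
    1 / (x ^ m * y ^ n) ≤ 1 / (max (x ^ a) (y ^ b) * (x ^ s * y ^ t)) := by
  have hmax : max (x ^ a) (y ^ b) ≤ x ^ a * y ^ b :=
    max_le (le_mul_of_one_le_right (by positivity) (one_le_pow₀ hy))
      (le_mul_of_one_le_left (by positivity) (one_le_pow₀ hx))
  refine one_div_le_one_div_of_le (by positivity) ?_
  calc max (x ^ a) (y ^ b) * (x ^ s * y ^ t) ≤ x ^ a * y ^ b * (x ^ s * y ^ t) := by gcongr
    _ = x ^ (a + s) * y ^ (b + t) := by ring
    _ ≤ x ^ m * y ^ n := by gcongr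

theorem positive_density_doubly_prescribed_general {k l : ℕ} (hk : 2 ≤ k) (hl : 2 ≤ l)
    (hind : MultIndep k l) {u : List (Fin k)} {v : List (Fin l)}
    (hu : u ≠ []) (hu0 : (u.head hu : ℕ) ≠ 0) (hv : v ≠ []) (hv0 : (v.head hv : ℕ) ≠ 0)
    (s t : ℕ) {z : Fin k} (hz : (z : ℕ) = 0) {z' : Fin l} (hz' : (z' : ℕ) = 0) :
    1 / (max ((k : ℝ) ^ u.length) ((l : ℝ) ^ v.length) * (k ^ s * l ^ t)) ≤ upperDensity {n : ℕ |
      (∃ x : List (Fin k), kRepr k n = u ++ x ++ List.replicate s z) ∧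
      ∃ y : List (Fin l), kRepr l n = v ++ y ++ List.replicate t z'} := by
  have hu_lt : (wordVal u : ℝ) + 1 ≤ k ^ u.length := by exact_mod_cast wordVal_lt_pow_length hk u
  have hv_lt : (wordVal v : ℝ) + 1 ≤ l ^ v.length := by exact_mod_cast wordVal_lt_pow_length hl v
  have hM : 0 < k ^ s * l ^ t := by positivity
  calc 1 / (max ((k : ℝ) ^ u.length) ((l : ℝ) ^ v.length) * (k ^ s * l ^ t))
      ≤ 1 / max ((wordVal u : ℝ) + 1) (wordVal v + 1) / ((k ^ s * l ^ t : ℕ) : ℝ) := by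
        rw [div_div]
        push_cast
        gcongr
    _ ≤ _ := one_div_max_div_le_upperDensity hk hl hind (wordVal_pos hk hu hu0)
        (wordVal_pos hl hv hv0) hM s t
    _ ≤ _ := upperDensity_mono ?_
  rintro n ⟨hdvd, ⟨i, hi, hni⟩, j, hj, hnj⟩
  exact ⟨exists_kRepr_eq_append hk hu hu0 hz hi ((Nat.dvd_mul_right _ _).trans hdvd) hni,
    exists_kRepr_eq_append hl hv hv0 hz' hj ((Nat.dvd_mul_left _ _).trans hdvd) hnj⟩

/-- The set of `n` whose base-`k` representation is of the form `u x 0^{t+1}` and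
whose base-`l` representation is of the form `v y 0^{t+1}` has upper density at
least `ε / (1 + ε k^{t+1} l^{t+1}) > 0`, where
`ε = 1/(k^{|u|+t+2} l^{|v|+t+2})`. -/
theorem positive_density_doubly_prescribed (k l : ℕ) (hk : 2 ≤ k) (hl : 2 ≤ l)
    (hind : MultIndep k l)
    (u : List (Fin k)) (v : List (Fin l))
    (hu : u ≠ []) (hu0 : (u.head hu : ℕ) ≠ 0)
    (hv : v ≠ []) (hv0 : (v.head hv : ℕ) ≠ 0)
    (t : ℕ) (z₀ : Fin k) (hz₀ : (z₀ : ℕ) = 0) (z₀' : Fin l) (hz₀' : (z₀' : ℕ) = 0)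
    (A : Set ℕ)
    (hA : A = {n : ℕ |
      (∃ x : List (Fin k), kRepr k n = u ++ x ++ List.replicate (t + 1) z₀) ∧
      (∃ y : List (Fin l), kRepr l n = v ++ y ++ List.replicate (t + 1) z₀')})
    (ε : ℝ)
    (hε : ε = 1 / ((k : ℝ) ^ (u.length + t + 2) * (l : ℝ) ^ (v.length + t + 2))) :
    0 < upperDensity A ∧
      ε / (1 + ε * (k : ℝ) ^ (t + 1) * (l : ℝ) ^ (t + 1)) ≤ upperDensity A := by
  have hε0 : 0 < ε := by rw [hε]; positivity
  have hbound : ε ≤ upperDensity A := by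
    rw [hε, hA]
    exact (one_div_pow_mul_pow_le_one_div_max (by exact_mod_cast Nat.one_le_of_lt hk)
      (by exact_mod_cast Nat.one_le_of_lt hl) (by omega) (by omega)).trans
      (positive_density_doubly_prescribed_general hk hl hind hu hu0 hv hv0 _ _ hz₀ hz₀')
  exact ⟨hε0.trans_le hbound,
    (div_le_self hε0.le (le_add_of_nonneg_right (by positivity))).trans hbound⟩
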